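/- (Asymptotic superiority of preconditioning.) For every y ∈ ℝ^{d_y}, let v_P ∈ ℝ^{d_x} be a unit vector with ‖D_xΩ^P(x⋆(y), y)[v_P]‖ = ‖D_xΩ^P(x⋆(y), y)‖_op, and set δ := ‖P(x⋆(y), y) − F_1(x⋆(y), y)‖_op. Then ‖D_xΩ^φ(x⋆(y), y)‖_op² − ‖D_xΩ^P(x⋆(y), y)‖_op² ≥ ‖D_xΩ^φ(x⋆(y), y)[v_P]‖² − ‖D_xΩ(x⋆(y), y)‖_op² · ‖P(x⋆(y), y)^{−1}‖_op² · δ². -/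

import Mathlib

noncomputable section

open ContinuousLinearMap RealInnerProductSpace

abbrev E (n : ℕ) : Type := EuclideanSpace ℝ (Fin n)

variable {dx dy : ℕ}

/-- Partial Fréchet derivative in the first variable. -/
def pd1 {k : ℕ} (G : E dx × E dy → E k) (x : E dx) (y : E dy) : E dx →L[ℝ] E k :=
  fderiv ℝ (fun x' => G (x', y)) x

/-- Partial Fréchet derivative in the second variable. -/
def pd2 {k : ℕ} (G : E dx × E dy → E k) (x : E dx) (y : E dy) : E dy →L[ℝ] E k :=
  fderiv ℝ (fun y' => G (x, y')) y

/-- Partial gradient in the first variable. -/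
def grad1 (g : E dx × E dy → ℝ) (x : E dx) (y : E dy) : E dx :=
  gradient (fun x' => g (x', y)) x

/-- Partial gradient in the second variable. -/
def grad2 (g : E dx × E dy → ℝ) (x : E dx) (y : E dy) : E dy :=
  gradient (fun y' => g (x, y')) y

/-- Ψ(x, y) = −F₂(x,y)^⊤ ∘ (F₁(x,y)^⊤)⁻¹. -/
def Psi (F : E dx × E dy → E dx) (x : E dx) (y : E dy) : E dx →L[ℝ] E dy :=
  -((adjoint (pd2 F x y)).comp (Ring.inverse (adjoint (pd1 F x y))))

/-- The IFT formula Ω(x,y) = g₂(x,y) + Ψ(x,y) g₁(x,y). -/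
def Omega (F : E dx × E dy → E dx) (g : E dx × E dy → ℝ) (x : E dx) (y : E dy) : E dy :=
  grad2 g x y + Psi F x y (grad1 g x y)

/-- φ₁₁(z,y)[w]: Hessian in z of z ↦ ⟪w, φ(z,y)⟫. -/
def phi11 (φ : E dx × E dy → E dx) (z : E dx) (y : E dy) (w : E dx) : E dx →L[ℝ] E dx :=
  fderiv ℝ (fun z' => gradient (fun z'' => ⟪w, φ (z'', y)⟫) z') z

/-- φ₂₁(z,y)[w]: mixed second derivative of (z,y) ↦ ⟪w, φ(z,y)⟫, an element of ℝ^{dx×dy}. -/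
def phi21 (φ : E dx × E dy → E dx) (z : E dx) (y : E dy) (w : E dx) : E dy →L[ℝ] E dx :=
  fderiv ℝ (fun y' => gradient (fun z' => ⟪w, φ (z', y')⟫) z) y

/-- Uᶠ(x,y) = F₂ + F₁ φ₂(z,y) + φ₁(z,y)⁻¹ (φ₂₁(z,y)[F(x,y)]), with z = φ(·,y)⁻¹(x). -/
def Uphi (F : E dx × E dy → E dx) (φ : E dx × E dy → E dx) (φinv : E dx × E dy → E dx)
    (x : E dx) (y : E dy) : E dy →L[ℝ] E dx :=
  pd2 F x y + (pd1 F x y).comp (pd2 φ (φinv (x, y)) y) +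
    (Ring.inverse (pd1 φ (φinv (x, y)) y)).comp (phi21 φ (φinv (x, y)) y (F (x, y)))

/-- Vᶠ(x,y) = (φ₁^⊤)⁻¹ (φ₁₁(z,y)[F(x,y)]) φ₁⁻¹ + F₁(x,y), with z = φ(·,y)⁻¹(x). -/
def Vphi (F : E dx × E dy → E dx) (φ : E dx × E dy → E dx) (φinv : E dx × E dy → E dx)
    (x : E dx) (y : E dy) : E dx →L[ℝ] E dx :=
  (Ring.inverse (adjoint (pd1 φ (φinv (x, y)) y))).comp
      ((phi11 φ (φinv (x, y)) y (F (x, y))).comp (Ring.inverse (pd1 φ (φinv (x, y)) y))) +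
    pd1 F x y

/-- Ψᶠ(x,y) = φ₂(z,y)^⊤ − Uᶠ(x,y)^⊤ (Vᶠ(x,y)^⊤)⁻¹. -/
def Psiphi (F : E dx × E dy → E dx) (φ : E dx × E dy → E dx) (φinv : E dx × E dy → E dx)
    (x : E dx) (y : E dy) : E dx →L[ℝ] E dy :=
  adjoint (pd2 φ (φinv (x, y)) y) -
    (adjoint (Uphi F φ φinv x y)).comp (Ring.inverse (adjoint (Vphi F φ φinv x y)))

/-- The reparameterized formula Ωᶠ(x,y) = g₂(x,y) + Ψᶠ(x,y) g₁(x,y). -/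
def Omegaphi (F : E dx × E dy → E dx) (g : E dx × E dy → ℝ)
    (φ : E dx × E dy → E dx) (φinv : E dx × E dy → E dx) (x : E dx) (y : E dy) : E dy :=
  grad2 g x y + Psiphi F φ φinv x y (grad1 g x y)


/-- Preconditioning step x̃(x,y) = x − P(x,y)⁻¹ F(x,y). -/
def xtilde (F : E dx × E dy → E dx) (P : E dx × E dy → (E dx →L[ℝ] E dx))
    (x : E dx) (y : E dy) : E dx :=
  x - Ring.inverse (P (x, y)) (F (x, y))

/-- Preconditioned formula Ωᴾ(x,y) = Ω(x̃(x,y), y). -/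
def OmegaP (F : E dx × E dy → E dx) (g : E dx × E dy → ℝ)
    (P : E dx × E dy → (E dx →L[ℝ] E dx)) (x : E dx) (y : E dy) : E dy :=
  Omega F g (xtilde F P x y) y

/-- The adjoint operation on real operators is differentiable along differentiable families. -/
theorem DifferentiableAt.adjoint_clm {V : Type*} [NormedAddCommGroup V] [NormedSpace ℝ V]
    {m n : ℕ} {A : V → E m →L[ℝ] E n} {x : V} (hA : DifferentiableAt ℝ A x) :
    DifferentiableAt ℝ (fun x => adjoint (A x)) x := by
  have h : IsBoundedLinearMap ℝ (fun B : E m →L[ℝ] E n => adjoint B) :=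
    { map_add := fun B C => map_add _ B C
      map_smul := fun c B => by simp
      bound := ⟨1, one_pos, fun B => by simp⟩ }
  exact h.differentiableAt.comp x hA

/-- The gradient is differentiable wherever the Fréchet derivative is. -/
theorem DifferentiableAt.toDual_symm {V : Type*} [NormedAddCommGroup V] [NormedSpace ℝ V]
    {m : ℕ} {A : V → E m →L[ℝ] ℝ} {x : V} (hA : DifferentiableAt ℝ A x) :
    DifferentiableAt ℝ (fun x => (InnerProductSpace.toDual ℝ (E m)).symm (A x)) x := by
  have h : IsBoundedLinearMap ℝ
      (fun B : E m →L[ℝ] ℝ => (InnerProductSpace.toDual ℝ (E m)).symm B) :=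
    { map_add := fun B C => map_add _ B C
      map_smul := fun c B => by simp
      bound := ⟨1, one_pos, fun B => by
        rw [one_mul]
        exact ((InnerProductSpace.toDual ℝ (E m)).symm.norm_map B).le⟩ }
  exact h.differentiableAt.comp x hA

/-- The partial derivative in the first variable of a smooth map depends differentiably on that
variable. -/
theorem differentiable_fderiv_fst {V : Type*} [NormedAddCommGroup V] [NormedSpace ℝ V]
    {G : E dx × E dy → V} (hG : ContDiff ℝ (⊤ : ℕ∞) G) (y : E dy) :
    Differentiable ℝ (fun x => fderiv ℝ (fun x' => G (x', y)) x) := by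
  have h : ContDiff ℝ (⊤ : ℕ∞) (fun x => fderiv ℝ (fun x' => G (x', y)) x) :=
    ContDiff.fderiv (m := (⊤ : ℕ∞)) (f := fun _ x' => G (x', y)) (g := fun x => x)
      (hG.comp (by fun_prop)) contDiff_id le_rfl
  exact h.differentiable (by simp)

/-- The partial derivative in the second variable of a smooth map depends differentiably on the
first variable. -/
theorem differentiable_fderiv_snd {V : Type*} [NormedAddCommGroup V] [NormedSpace ℝ V]
    {G : E dx × E dy → V} (hG : ContDiff ℝ (⊤ : ℕ∞) G) (y : E dy) :
    Differentiable ℝ (fun x => fderiv ℝ (fun y' => G (x, y')) y) := by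
  have h : ContDiff ℝ (⊤ : ℕ∞) (fun x => fderiv ℝ (fun y' => G (x, y')) y) :=
    ContDiff.fderiv (m := (⊤ : ℕ∞)) (f := fun x y' => G (x, y')) (g := fun _ => y)
      (hG.comp (by fun_prop)) contDiff_const le_rfl
  exact h.differentiable (by simp)

theorem isUnit_adjoint {n : ℕ} {A : E n →L[ℝ] E n} (hA : IsUnit A) : IsUnit (adjoint A) := by
  rw [← star_eq_adjoint]
  exact hA.star

theorem DifferentiableAt.ring_inverse_clm {V : Type*} [NormedAddCommGroup V] [NormedSpace ℝ V]
    {n : ℕ} {A : V → E n →L[ℝ] E n} {x : V} (hA : DifferentiableAt ℝ A x) (hu : IsUnit (A x)) :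
    DifferentiableAt ℝ (fun x => Ring.inverse (A x)) x :=
  (differentiableAt_inverse hu).comp x hA

theorem differentiableAt_Omega {F : E dx × E dy → E dx} {g : E dx × E dy → ℝ}
    (hF : ContDiff ℝ (⊤ : ℕ∞) F) (hg : ContDiff ℝ (⊤ : ℕ∞) g) {x : E dx} {y : E dy}
    (hinv : IsUnit (pd1 F x y)) : DifferentiableAt ℝ (fun x => Omega F g x y) x := by
  have hg₁ : DifferentiableAt ℝ (fun x => grad1 g x y) x :=
    (differentiable_fderiv_fst hg y x).toDual_symm
  have hg₂ : DifferentiableAt ℝ (fun x => grad2 g x y) x :=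
    (differentiable_fderiv_snd hg y x).toDual_symm
  have hF₂ : DifferentiableAt ℝ (fun x => adjoint (pd2 F x y)) x :=
    (differentiable_fderiv_snd hF y x).adjoint_clm
  have hF₁ : DifferentiableAt ℝ (fun x => Ring.inverse (adjoint (pd1 F x y))) x :=
    (differentiable_fderiv_fst hF y x).adjoint_clm.ring_inverse_clm (isUnit_adjoint hinv)
  exact hg₂.add ((hF₂.clm_comp hF₁).neg.clm_apply hg₁)

/-- At a root of `F(·, y)`, the preconditioning step has derivative `P⁻¹ (P - F₁)`. -/
theorem hasFDerivAt_xtilde {F : E dx × E dy → E dx} {P : E dx × E dy → (E dx →L[ℝ] E dx)}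
    {x : E dx} {y : E dy} (hF : DifferentiableAt ℝ (fun x => F (x, y)) x)
    (hP : DifferentiableAt ℝ (fun x => P (x, y)) x) (hPinv : IsUnit (P (x, y)))
    (hroot : F (x, y) = 0) :
    HasFDerivAt (fun x => xtilde F P x y)
      ((Ring.inverse (P (x, y))).comp (P (x, y) - pd1 F x y)) x := by
  have h := (hasFDerivAt_id x).sub
    ((hP.ring_inverse_clm hPinv).hasFDerivAt.clm_apply hF.hasFDerivAt)
  refine h.congr_fderiv ?_
  have hcancel : (Ring.inverse (P (x, y))).comp (P (x, y)) = ContinuousLinearMap.id ℝ (E dx) :=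
    Ring.inverse_mul_cancel _ hPinv
  ext1 v
  simp [comp_sub, hcancel, hroot, pd1]

theorem norm_fderiv_OmegaP_le {F : E dx × E dy → E dx} {g : E dx × E dy → ℝ}
    {P : E dx × E dy → (E dx →L[ℝ] E dx)} {x : E dx} {y : E dy}
    (hF : ContDiff ℝ (⊤ : ℕ∞) F) (hg : ContDiff ℝ (⊤ : ℕ∞) g) (hP : ContDiff ℝ 1 P)
    (hinv : IsUnit (pd1 F x y)) (hPinv : IsUnit (P (x, y))) (hroot : F (x, y) = 0) :
    ‖fderiv ℝ (fun x => OmegaP F g P x y) x‖ ≤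
      ‖fderiv ℝ (fun x => Omega F g x y) x‖ *
        (‖Ring.inverse (P (x, y))‖ * ‖P (x, y) - pd1 F x y‖) := by
  have hFx : DifferentiableAt ℝ (fun x => F (x, y)) x :=
    (hF.comp (contDiff_prodMk_left y)).differentiable (by simp) x
  have hPx : DifferentiableAt ℝ (fun x => P (x, y)) x :=
    (hP.comp (contDiff_prodMk_left y)).differentiable one_ne_zero x
  have hfix : xtilde F P x y = x := by simp [xtilde, hroot]
  have hΩ : HasFDerivAt (fun x => Omega F g x y) (fderiv ℝ (fun x => Omega F g x y) x)
      (xtilde F P x y) := by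
    rw [hfix]
    exact (differentiableAt_Omega hF hg hinv).hasFDerivAt
  have hΩP : HasFDerivAt (fun x => OmegaP F g P x y) _ x :=
    HasFDerivAt.comp (g := fun x => Omega F g x y) (f := fun x => xtilde F P x y) x hΩ
      (hasFDerivAt_xtilde hFx hPx hPinv hroot)
  rw [hΩP.fderiv]
  refine (opNorm_comp_le _ _).trans ?_
  gcongr
  exact opNorm_comp_le _ _

/-- asymptotic superiority of preconditioning. -/
theorem stmt14 (dx dy : ℕ) (hdx : 0 < dx) (hdy : 0 < dy)
    (F : E dx × E dy → E dx) (g : E dx × E dy → ℝ)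
    (hF : ContDiff ℝ (⊤ : ℕ∞) F) (hg : ContDiff ℝ (⊤ : ℕ∞) g)
    (hinv : ∀ (x : E dx) (y : E dy), IsUnit (pd1 F x y))
    (xs : E dy → E dx) (hxs : Differentiable ℝ xs)
    (hroot : ∀ y : E dy, F (xs y, y) = 0)
    (P : E dx × E dy → (E dx →L[ℝ] E dx)) (hP : ContDiff ℝ 1 P)
    (hPinv : ∀ (x : E dx) (y : E dy), IsUnit (P (x, y)))
    (φ : E dx × E dy → E dx) (hφ : ContDiff ℝ (⊤ : ℕ∞) φ)
    (φinv : E dx × E dy → E dx) (hφinv : ContDiff ℝ (⊤ : ℕ∞) φinv)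
    (hleft : ∀ (z : E dx) (y : E dy), φinv (φ (z, y), y) = z)
    (hright : ∀ (x : E dx) (y : E dy), φ (φinv (x, y), y) = x)
    (hphi1 : ∀ (z : E dx) (y : E dy), IsUnit (pd1 φ z y)) :
    ∀ (y : E dy) (vP : E dx), ‖vP‖ = 1 →
      ‖fderiv ℝ (fun x => OmegaP F g P x y) (xs y) vP‖ =
        ‖fderiv ℝ (fun x => OmegaP F g P x y) (xs y)‖ →
      ‖fderiv ℝ (fun x => Omegaphi F g φ φinv x y) (xs y)‖ ^ 2 -
        ‖fderiv ℝ (fun x => OmegaP F g P x y) (xs y)‖ ^ 2 ≥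
      ‖fderiv ℝ (fun x => Omegaphi F g φ φinv x y) (xs y) vP‖ ^ 2 -
        ‖fderiv ℝ (fun x => Omega F g x y) (xs y)‖ ^ 2 *
          ‖Ring.inverse (P (xs y, y))‖ ^ 2 *
          ‖P (xs y, y) - pd1 F (xs y) y‖ ^ 2 := by
  intro y vP hv _
  have hφv : ‖fderiv ℝ (fun x => Omegaphi F g φ φinv x y) (xs y) vP‖ ≤
      ‖fderiv ℝ (fun x => Omegaphi F g φ φinv x y) (xs y)‖ :=
    unit_le_opNorm _ _ hv.le
  have hΩP := norm_fderiv_OmegaP_le hF hg hP (hinv (xs y) y) (hPinv (xs y) y) (hroot y)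
  rw [ge_iff_le, mul_assoc, ← mul_pow, ← mul_pow]
  gcongr
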